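/- Let n ≥ 1, let 𝒯 and 𝒯' be any two tree sequences of order n, and let k ∈ ℤ^n. Then L_n(𝒯,k) = L_n(𝒯',k); that is, the signed enumeration of Gelfand-Tsetlin tree sequences does not depend on the underlying tree sequence. -/

import Mathlib

/-- The simple graph underlying a directed edge labeling. -/
def treeRel {n : ℕ} (e : Fin (n - 1) → Fin n × Fin n) : SimpleGraph (Fin n) :=
  SimpleGraph.fromRel (fun p q => ∃ j, e j = (p, q))

/-- An `n`-tree: a directed tree whose `n` vertices are identified with `1, …, n`
(here `Fin n`) and whose `n - 1` edges are identified with `1', …, (n-1)'`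
(here `Fin (n-1)`); `edge j = (p, q)` means the edge `j'` is directed from `p` to `q`. -/
structure NTree (n : ℕ) where
  edge : Fin (n - 1) → Fin n × Fin n
  loopless : ∀ j, (edge j).1 ≠ (edge j).2
  edgeInj : ∀ j j' : Fin (n - 1),
    (edge j = edge j' ∨ edge j = ((edge j').2, (edge j').1)) → j = j'
  conn : (treeRel edge).Connected

/-- The head of the edge `j'` with respect to the standard orientation away from
the root `r`: the endpoint farther from `r`. -/
noncomputable def stdHead {n : ℕ} (T : NTree n) (r : Fin n) (j : Fin (n - 1)) : Fin n :=
  if (treeRel T.edge).dist r (T.edge j).1 < (treeRel T.edge).dist r (T.edge j).2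
    then (T.edge j).2 else (T.edge j).1

/-- The permutation `π` of the vertices: first the root, then the standard heads of the
edges `1', 2', …, (n-1)'` in this order. -/
noncomputable def permFun {n : ℕ} (T : NTree n) (r : Fin n) : Fin n → Fin n :=
  fun m => if h : m.1 = 0 then r else stdHead T r ⟨m.1 - 1, by have := m.isLt; omega⟩

/-- The sign of an `n`-tree with respect to a root `r`:
`(-1) ^ (number of reversed edges) * sgn π`. -/
noncomputable def treeSignAt {n : ℕ} (T : NTree n) (r : Fin n) : ℤ :=
  (-1) ^ (Finset.univ.filter
      (fun j : Fin (n - 1) => stdHead T r j ≠ (T.edge j).2)).card *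
    (if h : Function.Bijective (permFun T r) then
      ((Equiv.Perm.sign (Equiv.ofBijective (permFun T r) h) : ℤˣ) : ℤ) else 1)

/-- The sign of an `n`-tree (independent of the root; we use the vertex `1`). -/
noncomputable def treeSign {n : ℕ} (T : NTree n) : ℤ :=
  if h : 0 < n then treeSignAt T ⟨0, h⟩ else 1

/-- `l` is admissible for `(T, k)`: for each edge `j' = (p, q)`,
if `k p + p < k q + q` then `k p + p ≤ l j + j < k q + q`, and otherwise
`k q + q ≤ l j + j < k p + p` (all indices are 1-based in the paper, so a vertex
`p : Fin n` carries the label `k p + (p + 1)` and an edge `j : Fin (n-1)` the label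
`l j + (j + 1)`). -/
def Admissible {n : ℕ} (T : NTree n) (k : Fin n → ℤ) (l : Fin (n - 1) → ℤ) : Prop :=
  ∀ j : Fin (n - 1),
    if k (T.edge j).1 + ((T.edge j).1.1 : ℤ) + 1 < k (T.edge j).2 + ((T.edge j).2.1 : ℤ) + 1
    then k (T.edge j).1 + ((T.edge j).1.1 : ℤ) + 1 ≤ l j + (j.1 : ℤ) + 1 ∧
         l j + (j.1 : ℤ) + 1 < k (T.edge j).2 + ((T.edge j).2.1 : ℤ) + 1
    else k (T.edge j).2 + ((T.edge j).2.1 : ℤ) + 1 ≤ l j + (j.1 : ℤ) + 1 ∧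
         l j + (j.1 : ℤ) + 1 < k (T.edge j).1 + ((T.edge j).1.1 : ℤ) + 1

/-- The number of inversions of the pair `(T, k)`: edges `j' = (p, q)` with
`¬ (k p + p < k q + q)`. -/
def invCount {n : ℕ} (T : NTree n) (k : Fin n → ℤ) : ℕ :=
  (Finset.univ.filter (fun j : Fin (n - 1) =>
    ¬ (k (T.edge j).1 + ((T.edge j).1.1 : ℤ) + 1 <
        k (T.edge j).2 + ((T.edge j).2.1 : ℤ) + 1))).card

/-- A tree sequence of order `n`: `T_1, …, T_n` where `T_i` is an `i`-tree. -/
def TreeSeq (n : ℕ) := ∀ i : Fin n, NTree (i.1 + 1)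

/-- A Gelfand-Tsetlin tree sequence associated with `𝒯` and `k`: a sequence of
labelings `L i : Fin (i+1) → ℤ` with top labeling `k` and such that each `L (i-1)`
is admissible for `(T_{i+1}, L i)`. -/
def IsGTTreeSeq {n : ℕ} (𝒯 : TreeSeq n) (k : Fin n → ℤ)
    (L : ∀ i : Fin n, Fin (i.1 + 1) → ℤ) : Prop :=
  (∀ i : Fin n, i.1 + 1 = n → ∀ j : Fin (i.1 + 1),
      L i j = k ⟨j.1, by have := j.isLt; omega⟩) ∧
  ∀ i : Fin n, ∀ hi : 0 < i.1,
    Admissible (𝒯 i) (L i)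
      (fun j => L ⟨i.1 - 1, by have := i.isLt; omega⟩
        ⟨j.1, by have := j.isLt; show j.1 < i.1 - 1 + 1; omega⟩)

/-- The sign of a Gelfand-Tsetlin tree sequence:
`(-1) ^ (number of inversions) * sgn 𝒯`. -/
noncomputable def gtSign {n : ℕ} (𝒯 : TreeSeq n)
    (L : ∀ i : Fin n, Fin (i.1 + 1) → ℤ) : ℤ :=
  (-1) ^ (∑ i : Fin n, invCount (𝒯 i) (L i)) * ∏ i : Fin n, treeSign (𝒯 i)

/-- `L_n(𝒯, k)`: the signed enumeration of all Gelfand-Tsetlin tree sequences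
associated with `𝒯` and `k`. -/
noncomputable def Lsum {n : ℕ} (𝒯 : TreeSeq n) (k : Fin n → ℤ) : ℤ :=
  ∑ᶠ L ∈ {L : ∀ i : Fin n, Fin (i.1 + 1) → ℤ | IsGTTreeSeq 𝒯 k L}, gtSign 𝒯 L

/-!
Write `x_p = k_p + p`, and let `V(x)` be the matrix with entries `x_p` choose `c`. The signed
enumeration is `det V(x)` for every tree sequence. By induction on the order it suffices to see that
the signed sum of `det V(y)` over the box of admissible `y` is `det V(x)`. The determinant is
multilinear in its rows, and summing `choose y c` over the interval belonging to an edge `(p, q)`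
telescopes, up to the inversion sign, to `choose x_q (c + 1) - choose x_p (c + 1)`. These rows are
those of the incidence matrix of the tree times `V(x)`, and the incidence matrix, completed by a row
for the root, has determinant `sgn T`, because it is triangular once the vertices are ordered by
their distance from the root.
-/

open Matrix

section Determinant

variable {ι R : Type*} [Fintype ι] [DecidableEq ι] [CommRing R]

theorem det_eq_prod_diag_of_rank {β : Type*} [LinearOrder β] (M : Matrix ι ι R) (rank : ι → β)
    (hM : ∀ i j, i ≠ j → rank i ≤ rank j → M i j = 0) : M.det = ∏ i, M i i := by
  have triangular : M.BlockTriangular (OrderDual.toDual ∘ rank) := fun i j hij =>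
    hM i j (by rintro rfl; exact lt_irrefl _ hij) (le_of_lt hij)
  have block_diagonal (b : βᵒᵈ) : M.toSquareBlock (OrderDual.toDual ∘ rank) b =
      diagonal fun i => M i.1 i.1 := by
    ext i j
    rcases eq_or_ne i j with rfl | hij
    · simp [toSquareBlock_def]
    · rw [diagonal_apply_ne _ hij]
      exact hM i j (Subtype.coe_ne_coe.mpr hij) (OrderDual.toDual.injective (i.2.trans j.2.symm)).le
  rw [triangular.det, ← Finset.prod_fiberwise_of_maps_to (t := Finset.univ.image _) fun i _ =>
    Finset.mem_image_of_mem (OrderDual.toDual ∘ rank) (Finset.mem_univ i)]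
  refine Finset.prod_congr rfl fun b _ => ?_
  rw [block_diagonal, det_diagonal]
  exact (Finset.prod_subtype _ (by simp) fun i => M i i).symm

theorem sum_piFinset_det {β : Type*} (s : ι → Finset β) (row : ι → β → ι → R) :
    ∑ y ∈ Fintype.piFinset s, (of fun i j => row i (y i) j).det =
      (of fun i j => ∑ b ∈ s i, row i b j).det := by
  have expand := (detRowAlternating (n := ι) (R := R)).toMultilinearMap.map_sum_finset row s
  have row_sum : (fun i => ∑ b ∈ s i, row i b) = of fun i j => ∑ b ∈ s i, row i b j := by
    ext i j
    exact Finset.sum_apply j (s i) (row i)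
  rw [row_sum] at expand
  exact expand.symm

end Determinant

section Tree

variable {n : ℕ}

/-- The endpoint of the edge `j` nearer to the root `r`, that is, the tail of `j` with respect to
the standard orientation. -/
noncomputable def stdTail (T : NTree n) (r : Fin n) (j : Fin (n - 1)) : Fin n :=
  if (treeRel T.edge).dist r (T.edge j).1 < (treeRel T.edge).dist r (T.edge j).2
    then (T.edge j).1 else (T.edge j).2

theorem stdHead_eq_and_stdTail_eq {T : NTree n} {r u v : Fin n} {j : Fin (n - 1)}
    (hj : T.edge j = (u, v) ∨ T.edge j = (v, u))
    (hlt : (treeRel T.edge).dist r u < (treeRel T.edge).dist r v) :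
    stdHead T r j = v ∧ stdTail T r j = u := by
  rcases hj with hj | hj <;> simp [stdHead, stdTail, hj, hlt, hlt.le]

theorem exists_edge_toward_root (T : NTree n) {r v : Fin n} (hv : v ≠ r) :
    ∃ j, stdHead T r j = v ∧
      (treeRel T.edge).dist r (stdTail T r j) < (treeRel T.edge).dist r v := by
  obtain ⟨w, hw⟩ := T.conn.exists_walk_length_eq_dist v r
  cases w with
  | nil => exact absurd rfl hv
  | @cons _ u _ hadj w =>
    have nearer : (treeRel T.edge).dist r u < (treeRel T.edge).dist r v := by
      have := SimpleGraph.dist_le w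
      rw [SimpleGraph.Walk.length_cons] at hw
      rw [SimpleGraph.dist_comm (v := u), SimpleGraph.dist_comm (v := v)]
      omega
    rw [treeRel, SimpleGraph.fromRel_adj] at hadj
    obtain ⟨j, hj⟩ := exists_or.mpr hadj.2.symm
    obtain ⟨head_eq, tail_eq⟩ := stdHead_eq_and_stdTail_eq hj nearer
    exact ⟨j, head_eq, tail_eq ▸ nearer⟩

theorem permFun_zero (T : NTree (n + 1)) (r : Fin (n + 1)) : permFun T r 0 = r := rfl

theorem permFun_succ (T : NTree (n + 1)) (r : Fin (n + 1)) (j : Fin n) :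
    permFun T r j.succ = stdHead T r j := rfl

theorem permFun_bijective (T : NTree (n + 1)) (r : Fin (n + 1)) :
    Function.Bijective (permFun T r) := by
  rw [← Finite.surjective_iff_bijective]
  intro v
  rcases eq_or_ne v r with rfl | hv
  · exact ⟨0, permFun_zero T v⟩
  · obtain ⟨j, head_eq, -⟩ := exists_edge_toward_root T hv
    exact ⟨Fin.succ j, head_eq⟩

theorem dist_stdTail_lt_dist_stdHead (T : NTree (n + 1)) (r : Fin (n + 1)) (j : Fin n) :
    (treeRel T.edge).dist r (stdTail T r j) < (treeRel T.edge).dist r (stdHead T r j) := by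
  have permFun_injective := (permFun_bijective T r).injective
  have head_ne_root : stdHead T r j ≠ r := fun h =>
    Fin.succ_ne_zero j (permFun_injective h)
  obtain ⟨i, head_eq, hlt⟩ := exists_edge_toward_root T head_ne_root
  obtain rfl : i = j := Fin.succ_injective n (permFun_injective head_eq)
  exact hlt

variable (R : Type*) [CommRing R]

/-- The incidence matrix of a tree, whose row for the edge `(p, q)` is `e_q - e_p`, completed to a
square matrix by the top row `e_r`. -/
def rootedIncidence (T : NTree (n + 1)) (r : Fin (n + 1)) :
    Matrix (Fin (n + 1)) (Fin (n + 1)) R :=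
  of (Fin.cons (Pi.single r 1) fun j : Fin n =>
    Pi.single (T.edge j).2 1 - Pi.single (T.edge j).1 1)

theorem rootedIncidence_zero (T : NTree (n + 1)) (r : Fin (n + 1)) :
    rootedIncidence R T r 0 = Pi.single r 1 := rfl

theorem rootedIncidence_succ (T : NTree (n + 1)) (r : Fin (n + 1)) (j : Fin n) :
    rootedIncidence R T r j.succ = Pi.single (T.edge j).2 1 - Pi.single (T.edge j).1 1 := rfl

theorem rootedIncidence_succ_eq_smul (T : NTree (n + 1)) (r : Fin (n + 1)) (j : Fin n) :
    rootedIncidence R T r j.succ =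
      (if stdHead T r j ≠ (T.edge j).2 then -1 else 1 : R) •
        (Pi.single (stdHead T r j) 1 - Pi.single (stdTail T r j) 1) := by
  have := T.loopless j
  rw [rootedIncidence_succ]
  unfold stdHead stdTail
  split_ifs <;> simp_all

theorem det_rootedIncidence_submatrix (T : NTree (n + 1)) (r : Fin (n + 1)) :
    ((rootedIncidence R T r).submatrix id (permFun T r)).det =
      ∏ j : Fin n, if stdHead T r j ≠ (T.edge j).2 then -1 else 1 := by
  have permFun_injective := (permFun_bijective T r).injective
  have tail_ne_head (j) : stdHead T r j ≠ stdTail T r j := fun h =>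
    (dist_stdTail_lt_dist_stdHead T r j).ne (by rw [h])
  rw [det_eq_prod_diag_of_rank _ fun m => (treeRel T.edge).dist r (permFun T r m),
    Fin.prod_univ_succ]
  · simp [permFun_zero, permFun_succ, rootedIncidence_zero, rootedIncidence_succ_eq_smul,
      tail_ne_head]
  · intro i c hic hrank
    have col_ne : permFun T r c ≠ permFun T r i := permFun_injective.ne hic.symm
    cases i using Fin.cases with
    | zero => exact Pi.single_eq_of_ne col_ne 1
    | succ j =>
      have col_ne_tail : permFun T r c ≠ stdTail T r j := fun h =>
        (dist_stdTail_lt_dist_stdHead T r j).not_ge (h ▸ hrank)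
      rw [permFun_succ] at col_ne
      simp [rootedIncidence_succ_eq_smul, col_ne, col_ne_tail]

theorem det_rootedIncidence (T : NTree (n + 1)) (r : Fin (n + 1)) :
    (rootedIncidence R T r).det = (treeSignAt T r : R) := by
  set π := Equiv.ofBijective (permFun T r) (permFun_bijective T r) with hπ
  have sign_mul_det : (Equiv.Perm.sign π : R) * (rootedIncidence R T r).det =
      ∏ j : Fin n, if stdHead T r j ≠ (T.edge j).2 then -1 else 1 := by
    rw [← det_permute', ← det_rootedIncidence_submatrix]
    rfl
  have sign_mul_self : (Equiv.Perm.sign π : R) * (Equiv.Perm.sign π : R) = 1 := by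
    rw [← Int.cast_mul, ← Units.val_mul, Int.units_mul_self, Units.val_one, Int.cast_one]
  have treeSignAt_eq : (treeSignAt T r : R) =
      (∏ j : Fin n, if stdHead T r j ≠ (T.edge j).2 then -1 else 1) * (Equiv.Perm.sign π : R) := by
    rw [treeSignAt, dif_pos (permFun_bijective T r), ← hπ, Finset.prod_ite, Finset.prod_const,
      Finset.prod_const_one, mul_one]
    push_cast
    rfl
  rw [treeSignAt_eq, ← sign_mul_det, mul_right_comm, sign_mul_self, one_mul]

theorem treeSignAt_mul_self (T : NTree n) (r : Fin n) : treeSignAt T r * treeSignAt T r = 1 := by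
  unfold treeSignAt
  rw [mul_mul_mul_comm, ← mul_pow]
  split_ifs
  · rw [← Units.val_mul, Int.units_mul_self]
    simp
  · simp

theorem treeSign_eq (T : NTree (n + 1)) : treeSign T = treeSignAt T 0 :=
  dif_pos n.succ_pos

variable {R}

theorem det_edge_sub (T : NTree (n + 1)) (A : Matrix (Fin (n + 1)) (Fin (n + 1)) R)
    (hA : ∀ p, A p 0 = 1) :
    (of fun i j : Fin n => A (T.edge i).2 j.succ - A (T.edge i).1 j.succ).det =
      treeSign T * A.det := by
  have mul_eq : rootedIncidence R T 0 * A =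
      of (Fin.cons (A 0) fun i : Fin n => A (T.edge i).2 - A (T.edge i).1) := by
    ext i : 1
    cases i using Fin.cases with
    | zero => rw [mul_apply_eq_vecMul, rootedIncidence_zero, single_one_vecMul]; rfl
    | succ i =>
      rw [mul_apply_eq_vecMul, rootedIncidence_succ, sub_vecMul, single_one_vecMul,
        single_one_vecMul]
      rfl
  rw [treeSign_eq, ← det_rootedIncidence, ← det_mul, mul_eq, det_succ_column_zero,
    Fin.sum_univ_succ]
  simp [hA, submatrix]

end Tree

section SummationOverBox

/-- The matrix of binomial coefficients `x i` choose `j`; up to a constant factor its determinant is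
the Vandermonde determinant. -/
def binomialVandermonde {n : ℕ} (x : Fin n → ℤ) : Matrix (Fin n) (Fin n) ℤ :=
  of fun i j => Ring.choose (x i) j

theorem sum_Ico_choose {a b : ℤ} (hab : a ≤ b) (m : ℕ) :
    ∑ y ∈ Finset.Ico a b, Ring.choose y m = Ring.choose b (m + 1) - Ring.choose a (m + 1) := by
  induction b, hab using Int.leInduction with
  | base => simp
  | succ b hb ih =>
    rw [← Finset.insert_Ico_right_eq_Ico_add_one hb, Finset.sum_insert Finset.right_notMem_Ico, ih,
      Ring.choose_succ_succ]
    ring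

theorem sum_Ico_min_max_choose (a b : ℤ) (m : ℕ) :
    ∑ y ∈ Finset.Ico (min a b) (max a b), Ring.choose y m =
      (if ¬ a < b then -1 else 1) * (Ring.choose b (m + 1) - Ring.choose a (m + 1)) := by
  rw [sum_Ico_choose min_le_max]
  split_ifs with h
  · rw [min_eq_left h.le, max_eq_right h.le, one_mul]
  · rw [min_eq_right (not_lt.mp h), max_eq_left (not_lt.mp h)]
    ring

variable {n : ℕ}

/-- The labels `k_p + p` by which admissibility compares vertices and edges, with the 1-based index
of the paper. -/
def shiftedLabels : (Fin n → ℤ) ≃ (Fin n → ℤ) :=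
  Equiv.addRight fun p => (p : ℤ) + 1

theorem shiftedLabels_apply (k : Fin n → ℤ) (p : Fin n) : shiftedLabels k p = k p + p + 1 :=
  (add_assoc _ _ _).symm

/-- The box of edge labelings `y` that are admissible with respect to the shifted vertex labels
`x`. -/
noncomputable def edgeBox (T : NTree n) (x : Fin n → ℤ) : Finset (Fin (n - 1) → ℤ) :=
  Fintype.piFinset fun j =>
    Finset.Ico (min (x (T.edge j).1) (x (T.edge j).2)) (max (x (T.edge j).1) (x (T.edge j).2))

theorem shiftedLabels_mem_edgeBox (T : NTree n) (k : Fin n → ℤ) (l : Fin (n - 1) → ℤ) :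
    shiftedLabels l ∈ edgeBox T (shiftedLabels k) ↔ Admissible T k l := by
  simp only [edgeBox, Admissible, Fintype.mem_piFinset, Finset.mem_Ico, shiftedLabels_apply]
  refine forall_congr' fun j => ?_
  split_ifs <;> omega

theorem bijOn_shiftedLabels_admissible (T : NTree n) (k : Fin n → ℤ) :
    Set.BijOn shiftedLabels {l | Admissible T k l} (edgeBox T (shiftedLabels k)) :=
  shiftedLabels.bijOn fun l => shiftedLabels_mem_edgeBox T k l

theorem finite_setOf_admissible (T : NTree n) (k : Fin n → ℤ) : {l | Admissible T k l}.Finite :=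
  (bijOn_shiftedLabels_admissible T k).finite_iff_finite.mpr (Finset.finite_toSet _)

theorem prod_inversion_sign (T : NTree n) (k : Fin n → ℤ) :
    (∏ j, if ¬ shiftedLabels k (T.edge j).1 < shiftedLabels k (T.edge j).2 then -1 else 1 : ℤ) =
      (-1) ^ invCount T k := by
  simp only [shiftedLabels_apply]
  rw [Finset.prod_ite, Finset.prod_const, Finset.prod_const_one, mul_one, invCount]

theorem sum_edgeBox_det (T : NTree (n + 1)) (k : Fin (n + 1) → ℤ) :
    ∑ y ∈ edgeBox T (shiftedLabels k), (binomialVandermonde y).det =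
      (-1) ^ invCount T k * (treeSign T * (binomialVandermonde (shiftedLabels k)).det) := by
  set x := shiftedLabels k
  calc ∑ y ∈ edgeBox T x, (binomialVandermonde y).det
      = (of fun i j : Fin n => ∑ b ∈ Finset.Ico (min (x (T.edge i).1) (x (T.edge i).2))
          (max (x (T.edge i).1) (x (T.edge i).2)), Ring.choose b (j : ℕ)).det :=
        sum_piFinset_det (ι := Fin n) _ fun _ b j => Ring.choose b (j : ℕ)
    _ = (of fun i j : Fin n => (if ¬ x (T.edge i).1 < x (T.edge i).2 then -1 else 1) *
          (binomialVandermonde x (T.edge i).2 j.succ -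
            binomialVandermonde x (T.edge i).1 j.succ)).det := by
        simp only [sum_Ico_min_max_choose, binomialVandermonde, of_apply, Fin.val_succ]
    _ = (-1) ^ invCount T k * (treeSign T * (binomialVandermonde x).det) := by
        rw [← prod_inversion_sign, ← Int.cast_id (n := treeSign T),
          ← det_edge_sub T _ fun p => Ring.choose_zero_right (x p)]
        exact det_mul_column _ _

theorem finsum_admissible_det (T : NTree (n + 1)) (k : Fin (n + 1) → ℤ) :
    (-1) ^ invCount T k * treeSign T *
        ∑ᶠ l ∈ {l | Admissible T k l}, (binomialVandermonde (shiftedLabels l)).det =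
      (binomialVandermonde (shiftedLabels k)).det := by
  have neg_one_mul_self : ((-1) ^ invCount T k * (-1) ^ invCount T k : ℤ) = 1 := by
    rw [← mul_pow, neg_one_mul, neg_neg, one_pow]
  have treeSign_mul_self : treeSign T * treeSign T = 1 := by
    rw [treeSign_eq, treeSignAt_mul_self]
  rw [finsum_mem_eq_of_bijOn shiftedLabels (bijOn_shiftedLabels_admissible T k)
      (g := fun y => (binomialVandermonde y).det) fun _ _ => rfl,
    finsum_mem_coe_finset, sum_edgeBox_det, mul_mul_mul_comm, neg_one_mul_self, one_mul,
    ← mul_assoc, treeSign_mul_self, one_mul]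

end SummationOverBox

section Recursion

/-- Triangular arrays of integers with rows of lengths `1, …, n`. -/
abbrev TriangularArray (n : ℕ) := ∀ i : Fin n, Fin (i.1 + 1) → ℤ

variable {n : ℕ}

/-- The last row of a triangular array; it is empty for `n = 0`. -/
def bottomRow (L : TriangularArray n) : Fin n → ℤ := fun j =>
  L ⟨n - 1, Nat.sub_one_lt_of_lt j.isLt⟩ ⟨j, by grind⟩

/-- The row of a triangular array preceding the row `i`; it is empty for `i = 0`. -/
def precedingRow (L : TriangularArray n) (i : Fin n) : Fin i → ℤ := fun j =>
  L ⟨i - 1, by omega⟩ ⟨j, by grind⟩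

/-- The triangular array obtained from `L` by appending the row `k`. -/
def snocRow (k : Fin (n + 1) → ℤ) (L : TriangularArray n) : TriangularArray (n + 1) :=
  Fin.snoc (α := fun i : Fin (n + 1) => Fin (i.1 + 1) → ℤ) L k

theorem snocRow_injective (k : Fin (n + 1) → ℤ) : Function.Injective (snocRow k) :=
  Fin.snoc_left_injective (α := fun i : Fin (n + 1) => Fin (i.1 + 1) → ℤ) k

theorem snocRow_last (k : Fin (n + 1) → ℤ) (L : TriangularArray n) :
    snocRow k L (Fin.last n) = k :=
  Fin.snoc_last (α := fun i : Fin (n + 1) => Fin (i.1 + 1) → ℤ) k L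

theorem snocRow_castSucc (k : Fin (n + 1) → ℤ) (L : TriangularArray n) (i : Fin n) :
    snocRow k L i.castSucc = L i :=
  Fin.snoc_castSucc (α := fun i : Fin (n + 1) => Fin (i.1 + 1) → ℤ) k L i

theorem precedingRow_snocRow_last (k : Fin (n + 1) → ℤ) (L : TriangularArray n) :
    precedingRow (snocRow k L) (Fin.last n) = bottomRow L :=
  funext fun j => congrFun (snocRow_castSucc k L ⟨n - 1, Nat.sub_one_lt_of_lt j.isLt⟩) _

theorem precedingRow_snocRow_castSucc (k : Fin (n + 1) → ℤ) (L : TriangularArray n) (i : Fin n) :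
    precedingRow (snocRow k L) i.castSucc = precedingRow L i :=
  funext fun _ => congrFun (snocRow_castSucc k L ⟨i - 1, by omega⟩) _

theorem isGTTreeSeq_iff (𝒯 : TreeSeq n) (k : Fin n → ℤ) (L : TriangularArray n) :
    IsGTTreeSeq 𝒯 k L ↔ bottomRow L = k ∧ ∀ i, Admissible (𝒯 i) (L i) (precedingRow L i) := by
  refine and_congr ⟨fun h => ?_, ?_⟩ (forall_congr' fun i => ⟨fun h => ?_, fun h _ => h⟩)
  · exact funext fun j => h _ (Nat.sub_one_add_one_eq_of_pos j.pos) _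
  · rintro rfl i hi j
    cases n with
    | zero => exact i.elim0
    | succ n =>
      obtain rfl : i = Fin.last n := Fin.ext (Nat.succ_injective hi)
      rfl
  · rcases Nat.eq_zero_or_pos i.1 with hi | hi
    · exact fun j => absurd j.isLt (by omega)
    · exact h hi

theorem bottomRow_eq_of_isGTTreeSeq {𝒯 : TreeSeq n} {k : Fin n → ℤ} {L : TriangularArray n}
    (hL : IsGTTreeSeq 𝒯 k L) : bottomRow L = k :=
  ((isGTTreeSeq_iff 𝒯 k L).mp hL).1

/-- The tree sequence `T_1, …, T_n` obtained from `T_1, …, T_{n+1}` by omitting the last tree. -/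
def TreeSeq.init (𝒯 : TreeSeq (n + 1)) : TreeSeq n := fun i => 𝒯 i.castSucc

theorem isGTTreeSeq_snocRow (𝒯 : TreeSeq (n + 1)) (k : Fin (n + 1) → ℤ) (L : TriangularArray n) :
    IsGTTreeSeq 𝒯 k (snocRow k L) ↔
      Admissible (𝒯 (Fin.last n)) k (bottomRow L) ∧ IsGTTreeSeq 𝒯.init (bottomRow L) L := by
  have bottomRow_snocRow : bottomRow (snocRow k L) = k := snocRow_last k L
  simp only [isGTTreeSeq_iff, bottomRow_snocRow, true_and, Fin.forall_fin_succ', snocRow_last,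
    snocRow_castSucc, precedingRow_snocRow_last, precedingRow_snocRow_castSucc]
  exact and_comm

theorem exists_snocRow_eq {𝒯 : TreeSeq (n + 1)} {k : Fin (n + 1) → ℤ} {L : TriangularArray (n + 1)}
    (hL : IsGTTreeSeq 𝒯 k L) : ∃ L', snocRow k L' = L := by
  obtain rfl : L (Fin.last n) = k := bottomRow_eq_of_isGTTreeSeq hL
  exact ⟨_, Fin.snoc_init_self (α := fun i : Fin (n + 1) => Fin (i.1 + 1) → ℤ) L⟩

theorem setOf_isGTTreeSeq_succ (𝒯 : TreeSeq (n + 1)) (k : Fin (n + 1) → ℤ) :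
    {L | IsGTTreeSeq 𝒯 k L} = snocRow k ''
      ⋃ l ∈ {l | Admissible (𝒯 (Fin.last n)) k l}, {L | IsGTTreeSeq 𝒯.init l L} := by
  ext L
  simp only [Set.mem_image, Set.mem_iUnion, Set.mem_ofPred_eq, exists_prop]
  constructor
  · intro hL
    obtain ⟨L, rfl⟩ := exists_snocRow_eq hL
    exact ⟨L, ⟨bottomRow L, (isGTTreeSeq_snocRow 𝒯 k L).mp hL⟩, rfl⟩
  · rintro ⟨L, ⟨l, hl, hL⟩, rfl⟩
    obtain rfl := bottomRow_eq_of_isGTTreeSeq hL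
    exact (isGTTreeSeq_snocRow 𝒯 k L).mpr ⟨hl, hL⟩

theorem finite_setOf_isGTTreeSeq (𝒯 : TreeSeq n) (k : Fin n → ℤ) :
    {L | IsGTTreeSeq 𝒯 k L}.Finite := by
  induction n with
  | zero => exact Set.toFinite _
  | succ n ih =>
    rw [setOf_isGTTreeSeq_succ]
    exact ((finite_setOf_admissible _ k).biUnion fun l _ => ih 𝒯.init l).image _

theorem gtSign_snocRow (𝒯 : TreeSeq (n + 1)) (k : Fin (n + 1) → ℤ) (L : TriangularArray n) :
    gtSign 𝒯 (snocRow k L) =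
      (-1) ^ invCount (𝒯 (Fin.last n)) k * treeSign (𝒯 (Fin.last n)) * gtSign 𝒯.init L := by
  simp only [gtSign, Fin.sum_univ_castSucc, Fin.prod_univ_castSucc, snocRow_last, snocRow_castSucc,
    pow_add, TreeSeq.init]
  ring

theorem Lsum_succ (𝒯 : TreeSeq (n + 1)) (k : Fin (n + 1) → ℤ) :
    Lsum 𝒯 k = (-1) ^ invCount (𝒯 (Fin.last n)) k * treeSign (𝒯 (Fin.last n)) *
      ∑ᶠ l ∈ {l | Admissible (𝒯 (Fin.last n)) k l}, Lsum 𝒯.init l := by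
  have disjoint : {l | Admissible (𝒯 (Fin.last n)) k l}.PairwiseDisjoint
      fun l => {L | IsGTTreeSeq 𝒯.init l L} := fun l _ l' _ hne =>
    Set.disjoint_left.mpr fun L hL hL' =>
      hne ((bottomRow_eq_of_isGTTreeSeq hL).symm.trans (bottomRow_eq_of_isGTTreeSeq hL'))
  rw [Lsum, setOf_isGTTreeSeq_succ, finsum_mem_image (snocRow_injective k).injOn]
  simp only [gtSign_snocRow]
  rw [← mul_finsum_mem, finsum_mem_biUnion disjoint (finite_setOf_admissible _ k) fun l _ =>
    finite_setOf_isGTTreeSeq 𝒯.init l]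
  rfl

theorem Lsum_eq_det (𝒯 : TreeSeq n) (k : Fin n → ℤ) :
    Lsum 𝒯 k = (binomialVandermonde (shiftedLabels k)).det := by
  induction n with
  | zero =>
    have all_gt : {L | IsGTTreeSeq 𝒯 k L} = Set.univ :=
      Set.eq_univ_of_forall fun L => ⟨fun i => i.elim0, fun i => i.elim0⟩
    rw [Lsum, all_gt, finsum_mem_univ, finsum_unique]
    simp [gtSign]
  | succ n ih =>
    rw [Lsum_succ, ← finsum_admissible_det (𝒯 (Fin.last n)) k]
    simp only [ih]

end Recursion

/-- Independency: the signed enumeration of Gelfand-Tsetlin tree sequences does not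
depend on the underlying tree sequence. -/
theorem gt_tree_sequence_independency (n : ℕ) (hn : 1 ≤ n)
    (𝒯 𝒯' : TreeSeq n) (k : Fin n → ℤ) :
    Lsum 𝒯 k = Lsum 𝒯' k := by
  rw [Lsum_eq_det, Lsum_eq_det]
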